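/- For every natural number k ≥ 1 and every real number x ≥ k + 2, the double inequality R_k(x) < K(x)/Γ(x + 1) ≤ ((P_{k−1}(x) + 1)/P_{k−1}(x)) · R_k(x) holds, where the right-hand inequality is an equality when x = k + 2. Here R_k(x) = Σ_{j=0}^{k−1} Π_{i=0}^{j} 1/(x − i) and P_{k−1}(x) = 1 + Σ_{j=0}^{k−2} Π_{i=0}^{j} (x − (k−1) + i). -/

import Mathlib

open MeasureTheory Set

/-- Kurepa's function for real `x`:
`K(x) = ∫₀^∞ e^{-t} (t^x - 1)/(t - 1) dt`. -/
noncomputable def kurepa (x : ℝ) : ℝ :=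
  ∫ t in Ioi (0 : ℝ), Real.exp (-t) * ((t ^ x - 1) / (t - 1))

/-- The rational function `R k x = ∑_{j=0}^{k-1} ∏_{i=0}^{j} 1/(x-i)`. -/
noncomputable def kurepaR (k : ℕ) (x : ℝ) : ℝ :=
  ∑ j ∈ Finset.range k, ∏ i ∈ Finset.range (j + 1), (1 / (x - (i : ℝ)))

/-- The polynomial `P k x = 1 + ∑_{j=0}^{k-1} ∏_{i=0}^{j} (x - k + i)`. -/
noncomputable def kurepaP (k : ℕ) (x : ℝ) : ℝ :=
  1 + ∑ j ∈ Finset.range k, ∏ i ∈ Finset.range (j + 1), (x - (k : ℝ) + (i : ℝ))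

lemma kI_rec (x : ℝ) (hx : 0 < x)
    (hi : IntegrableOn (fun t : ℝ => Real.exp (-t) * ((t ^ (x - 1) - 1) / (t - 1))) (Ioi 0)) :
    IntegrableOn (fun t : ℝ => Real.exp (-t) * ((t ^ x - 1) / (t - 1))) (Ioi 0) ∧
    kurepa x = Real.Gamma x + kurepa (x - 1) := by
  have hg := Real.GammaIntegral_convergent hx
  have hae : (fun t : ℝ => Real.exp (-t) * t ^ (x - 1) +
      Real.exp (-t) * ((t ^ (x - 1) - 1) / (t - 1))) =ᵐ[volume.restrict (Ioi (0 : ℝ))]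
      (fun t : ℝ => Real.exp (-t) * ((t ^ x - 1) / (t - 1))) := by
    have h1 : ∀ᵐ t ∂(volume.restrict (Ioi (0 : ℝ))), t ≠ 1 :=
      ae_restrict_of_ae (by simp [ae_iff])
    filter_upwards [h1, ae_restrict_mem measurableSet_Ioi] with t ht ht0
    have ht0 : 0 < t := ht0
    have h2 : t - 1 ≠ 0 := sub_ne_zero.mpr ht
    have h3 : t ^ x = t ^ (x - 1) * t := by
      rw [Real.rpow_sub_one ht0.ne']; field_simp
    rw [h3]
    field_simp
    ring
  refine ⟨(hg.add hi).congr hae, ?_⟩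
  unfold kurepa
  rw [Real.Gamma_eq_integral hx, ← integral_congr_ae hae]
  exact integral_add hg hi

lemma kI_nonneg (s t : ℝ) (hs : 0 ≤ s) (ht : 0 < t) :
    0 ≤ Real.exp (-t) * ((t ^ s - 1) / (t - 1)) := by
  apply mul_nonneg (Real.exp_pos _).le
  rcases le_total t 1 with h | h
  · apply div_nonneg_of_nonpos
    · linarith [Real.rpow_le_one ht.le h hs]
    · linarith
  · apply div_nonneg
    · linarith [Real.one_le_rpow h hs]
    · linarith

lemma kI_le (s t : ℝ) (hs : 1 ≤ s) (hs2 : s ≤ 2) (ht : 0 < t) :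
    Real.exp (-t) * ((t ^ s - 1) / (t - 1)) ≤
      s * Real.exp (-t) + (s - 1) * (Ioi (1 : ℝ)).indicator (fun t => (t - 1) * Real.exp (-t)) t := by
  have he := Real.exp_pos (-t)
  have key : (t ^ s - 1) / (t - 1) ≤
      s + (s - 1) * (Ioi (1 : ℝ)).indicator (fun t => (t - 1)) t := by
    rcases lt_trichotomy t 1 with h | h | h
    · rw [indicator_of_notMem (by simp; exact h.le)]
      rw [div_le_iff_of_neg (by linarith)]
      have := one_add_mul_self_le_rpow_one_add (s := t - 1) (by linarith) hs
      rw [show 1 + (t - 1) = t by ring] at this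
      linarith
    · subst h; simp; linarith
    · rw [indicator_of_mem (by simpa using h)]
      rw [div_le_iff₀ (by linarith)]
      have := rpow_one_add_le_one_add_mul_self (s := t - 1) (p := s - 1) (by linarith) (by linarith) (by linarith)
      rw [show 1 + (t - 1) = t by ring, Real.rpow_sub_one ht.ne', div_le_iff₀ ht] at this
      nlinarith
  have h2 : (Ioi (1 : ℝ)).indicator (fun t => (t - 1) * Real.exp (-t)) t
      = (Ioi (1 : ℝ)).indicator (fun t => (t - 1)) t * Real.exp (-t) := by
    by_cases h : t ∈ Ioi (1 : ℝ) <;> simp [h]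
  rw [h2]
  nlinarith

lemma tail_int : IntegrableOn (fun t : ℝ => (t - 1) * Real.exp (-t)) (Ioi 1) ∧
    ∫ t in Ioi (1 : ℝ), (t - 1) * Real.exp (-t) = Real.exp (-1) := by
  have hd : ∀ t ∈ Ici (1 : ℝ), HasDerivAt (fun t : ℝ => -(t * Real.exp (-t)))
      ((t - 1) * Real.exp (-t)) t := by
    intro t _
    have := ((hasDerivAt_id t).mul ((hasDerivAt_neg t).exp)).neg
    refine this.congr_deriv ?_
    simp only [id]
    ring
  have hl : Filter.Tendsto (fun t : ℝ => -(t * Real.exp (-t))) Filter.atTop (nhds 0) := by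
    have := (Real.tendsto_pow_mul_exp_neg_atTop_nhds_zero 1).neg
    simpa using this
  have hp : ∀ t ∈ Ioi (1 : ℝ), 0 ≤ (t - 1) * Real.exp (-t) := by
    intro t ht
    have : 1 < t := ht
    exact mul_nonneg (by linarith) (Real.exp_pos _).le
  constructor
  · exact integrableOn_Ioi_deriv_of_nonneg' hd hp hl
  · rw [integral_Ioi_of_hasDerivAt_of_nonneg' hd hp hl]; simp

lemma base_bd (s : ℝ) (hs : 1 ≤ s) (hs2 : s ≤ 2) :
    IntegrableOn (fun t : ℝ => Real.exp (-t) * ((t ^ s - 1) / (t - 1))) (Ioi 0) ∧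
    kurepa s ≤ s + (s - 1) * Real.exp (-1) := by
  have h1 : IntegrableOn (fun t : ℝ => s * Real.exp (-t)) (Ioi 0) := by
    have := integrableOn_exp_neg_Ioi 0
    exact this.const_mul s
  have h2 : Integrable ((Ioi (1 : ℝ)).indicator (fun t => (t - 1) * Real.exp (-t))) :=
    tail_int.1.integrable_indicator measurableSet_Ioi
  have h3 : IntegrableOn (fun t => (s - 1) * (Ioi (1 : ℝ)).indicator (fun t => (t - 1) * Real.exp (-t)) t) (Ioi 0) :=
    (h2.const_mul (s - 1)).integrableOn
  have hi : IntegrableOn (fun t : ℝ => Real.exp (-t) * ((t ^ s - 1) / (t - 1))) (Ioi 0) := by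
    refine Integrable.mono' (h1.add h3) ?_ ?_
    · exact Measurable.aestronglyMeasurable (by fun_prop)
    · filter_upwards [ae_restrict_mem measurableSet_Ioi] with t ht
      rw [Real.norm_of_nonneg (kI_nonneg s t (by linarith) ht)]
      exact kI_le s t hs hs2 ht
  refine ⟨hi, ?_⟩
  have h4 : kurepa s ≤ ∫ t in Ioi (0:ℝ), (s * Real.exp (-t) + (s - 1) * (Ioi (1 : ℝ)).indicator (fun t => (t - 1) * Real.exp (-t)) t) :=
    setIntegral_mono_on hi (h1.add h3) measurableSet_Ioi (fun t ht => kI_le s t hs hs2 ht)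
  rw [integral_add h1 h3, integral_const_mul, integral_const_mul, integral_exp_neg_Ioi,
    setIntegral_indicator measurableSet_Ioi] at h4
  have : Ioi (0:ℝ) ∩ Ioi 1 = Ioi 1 := by
    exact inter_eq_right.mpr (Ioi_subset_Ioi zero_le_one)
  rw [this, tail_int.2] at h4
  simpa using h4

lemma kInt (n : ℕ) : ∀ x : ℝ, 1 ≤ x → x ≤ n + 2 →
    IntegrableOn (fun t : ℝ => Real.exp (-t) * ((t ^ x - 1) / (t - 1))) (Ioi 0) := by
  induction n with
  | zero => intro x h1 h2; exact (base_bd x h1 (by simpa using h2)).1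
  | succ n ih =>
    intro x h1 h2
    push_cast at h2
    by_cases h : x ≤ 2
    · exact (base_bd x h1 h).1
    · push Not at h
      exact (kI_rec x (by linarith) (ih (x - 1) (by linarith) (by linarith))).1

lemma k_rec (x : ℝ) (hx : 2 ≤ x) : kurepa x = Real.Gamma x + kurepa (x - 1) := by
  obtain ⟨n, hn⟩ := exists_nat_ge x
  exact (kI_rec x (by linarith) (kInt n (x - 1) (by linarith) (by linarith))).2

lemma k_nonneg (x : ℝ) (hx : 0 ≤ x) : 0 ≤ kurepa x :=
  setIntegral_nonneg measurableSet_Ioi (fun t ht => kI_nonneg x t hx ht)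

lemma k_pos (x : ℝ) (hx : 2 ≤ x) : 0 < kurepa x := by
  rw [k_rec x hx]
  have := Real.Gamma_pos_of_pos (show 0 < x by linarith)
  linarith [k_nonneg (x - 1) (by linarith)]

lemma k_one : kurepa 1 = 1 := by
  have := (kI_rec 1 one_pos (by simp)).2
  rw [this]
  simp [kurepa]

lemma k_two : kurepa 2 = 2 := by
  rw [k_rec 2 le_rfl, show (2:ℝ) - 1 = 1 by norm_num, k_one, Real.Gamma_two]; norm_num

lemma gam_const : Real.eulerMascheroniConstant < 0.61 := by
  have h := Real.eulerMascheroniConstant_lt_eulerMascheroniSeq' 16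
  refine h.trans ?_
  have h2 : Real.log 16 = 4 * Real.log 2 := by
    rw [show (16:ℝ) = 2 ^ 4 by norm_num, Real.log_pow]; norm_num
  have h3 := Real.log_two_gt_d9
  simp only [Real.eulerMascheroniSeq']
  norm_num [harmonic, Finset.sum_range_succ]
  rw [h2]
  linarith

lemma gam_lower (s : ℝ) (hs : 1 ≤ s) : 1 + 0.39 * (s - 1) ≤ Real.Gamma (s + 1) := by
  rcases hs.eq_or_lt with h | h
  · subst h; norm_num
  have hd := Real.hasDerivAt_Gamma_nat 1
  have hc := Real.convexOn_Gamma
  have := hc.le_slope_of_hasDerivAt (x := (1:ℕ) + 1) (y := s + 1) (by norm_num) (by simp; linarith) (by push_cast; linarith) hd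
  rw [slope_def_field, le_div_iff₀ (by push_cast; linarith)] at this
  have hg := gam_const
  norm_num at this
  nlinarith

lemma k_le_base (s : ℝ) (hs : 1 ≤ s) (hs2 : s ≤ 2) : kurepa s ≤ s * Real.Gamma (s + 1) := by
  have h1 := (base_bd s hs hs2).2
  have h2 := gam_lower s hs
  have h3 : Real.exp (-1) < 0.38 := by
    rw [Real.exp_neg, inv_lt_comm₀ (Real.exp_pos _) (by norm_num)]
    have := Real.exp_one_gt_d9
    refine lt_trans ?_ this
    norm_num
  nlinarith

lemma k_le_aux (n : ℕ) : ∀ y : ℝ, 2 ≤ y → y ≤ n + 3 → kurepa y ≤ Real.Gamma (y + 1) := by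
  have base : ∀ y : ℝ, 2 ≤ y → y ≤ 3 → kurepa y ≤ Real.Gamma (y + 1) := by
    intro y h1 h2
    have := k_le_base (y - 1) (by linarith) (by linarith)
    rw [k_rec y h1, Real.Gamma_add_one (by linarith)]
    rw [sub_add_cancel] at this
    linarith
  induction n with
  | zero => intro y h1 h2; exact base y h1 (by simpa using h2)
  | succ n ih =>
    intro y h1 h2
    push_cast at h2
    by_cases h : y ≤ 3
    · exact base y h1 h
    · push Not at h
      have := ih (y - 1) (by linarith) (by linarith)
      rw [sub_add_cancel] at this
      rw [k_rec y h1, Real.Gamma_add_one (by linarith)]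
      have := Real.Gamma_pos_of_pos (show 0 < y by linarith)
      nlinarith

lemma k_le (y : ℝ) (hy : 2 ≤ y) : kurepa y ≤ Real.Gamma (y + 1) := by
  obtain ⟨n, hn⟩ := exists_nat_ge y
  exact k_le_aux n y hy (by linarith)

lemma prodR (x : ℝ) (j : ℕ) (h : (j : ℝ) < x) :
    (∏ i ∈ Finset.range (j + 1), (1 / (x - (i : ℝ)))) * Real.Gamma (x + 1) = Real.Gamma (x - j) := by
  induction j with
  | zero =>
    have : x ≠ 0 := by simp at h; exact h.ne'
    simp [Real.Gamma_add_one this]; field_simp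
  | succ j ih =>
    push_cast at h ⊢
    rw [Finset.prod_range_succ, mul_right_comm, ih (by linarith)]
    have h2 : x - ((j:ℝ) + 1) ≠ 0 := by linarith
    rw [show x - (j:ℝ) = (x - (j + 1)) + 1 by ring, Real.Gamma_add_one h2]
    push_cast
    field_simp

lemma prodP (z : ℝ) (j : ℕ) (h : 0 < z) :
    (∏ i ∈ Finset.range j, (z + (i : ℝ))) * Real.Gamma z = Real.Gamma (z + j) := by
  induction j with
  | zero => simp
  | succ j ih =>
    rw [Finset.prod_range_succ, mul_right_comm, ih]
    have : z + j ≠ 0 := by positivity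
    push_cast
    rw [← add_assoc, Real.Gamma_add_one this]; ring

lemma sumR (k : ℕ) (x : ℝ) (h : (k : ℝ) ≤ x) :
    kurepaR k x * Real.Gamma (x + 1) = ∑ j ∈ Finset.range k, Real.Gamma (x - j) := by
  unfold kurepaR
  rw [Finset.sum_mul]
  refine Finset.sum_congr rfl fun j hj => prodR x j ?_
  have : (j : ℝ) < k := by exact_mod_cast Finset.mem_range.mp hj
  linarith

lemma sumP (n : ℕ) (x : ℝ) (h : (n : ℝ) < x) :
    kurepaP n x * Real.Gamma (x - n) = ∑ j ∈ Finset.range (n + 1), Real.Gamma (x - j) := by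
  unfold kurepaP
  rw [← Finset.sum_range_reflect (fun j : ℕ => Real.Gamma (x - j)) (n + 1), Finset.sum_range_succ', add_mul, Finset.sum_mul, add_comm]
  congr 1
  · refine Finset.sum_congr rfl fun j hj => ?_
    have hj := Finset.mem_range.mp hj
    rw [prodP (x - n) (j + 1) (by linarith)]
    congr 1
    rw [show n + 1 - 1 - (j + 1) = n - (j + 1) by omega, Nat.cast_sub (by omega)]
    ring
  · simp

lemma k_iter (k : ℕ) (x : ℝ) (h : (k : ℝ) + 1 ≤ x) :
    kurepa x = ∑ j ∈ Finset.range k, Real.Gamma (x - j) + kurepa (x - k) := by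
  induction k with
  | zero => simp
  | succ k ih =>
    push_cast at h ⊢
    rw [ih (by linarith), Finset.sum_range_succ, k_rec (x - k) (by linarith),
      show x - (k : ℝ) - 1 = x - (k + 1) by ring]
    ring

/-- For `k ≥ 1` and `x ≥ k + 2`,
`R_k(x) < K(x)/Γ(x+1) ≤ ((P_{k-1}(x)+1)/P_{k-1}(x)) R_k(x)`,
the right-hand inequality being an equality when `x = k + 2`. -/
theorem kurepa_div_Gamma_bounds (k : ℕ) (hk : 1 ≤ k) (x : ℝ)
    (hx : (k : ℝ) + 2 ≤ x) :
    kurepaR k x < kurepa x / Real.Gamma (x + 1) ∧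
    kurepa x / Real.Gamma (x + 1)
      ≤ ((kurepaP (k - 1) x + 1) / kurepaP (k - 1) x) * kurepaR k x ∧
    (x = (k : ℝ) + 2 →
      kurepa x / Real.Gamma (x + 1)
        = ((kurepaP (k - 1) x + 1) / kurepaP (k - 1) x) * kurepaR k x) := by

  obtain ⟨n, rfl⟩ : ∃ n, k = n + 1 := ⟨k - 1, by omega⟩
  simp only [Nat.add_sub_cancel]
  push_cast at hx ⊢
  have hn : (0 : ℝ) ≤ n := Nat.cast_nonneg n
  have hG : 0 < Real.Gamma (x + 1) := Real.Gamma_pos_of_pos (by linarith)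
  have hg : 0 < Real.Gamma (x - n) := Real.Gamma_pos_of_pos (by linarith)
  have hR := sumR (n + 1) x (by push_cast; linarith)
  have hP := sumP n x (by linarith)
  have hK := k_iter (n + 1) x (by push_cast; linarith)
  rw [← hR] at hK
  rw [← hR] at hP
  push_cast at hK
  have hPpos : 0 < kurepaP n x := by
    unfold kurepaP
    have : 0 ≤ ∑ j ∈ Finset.range n, ∏ i ∈ Finset.range (j + 1), (x - (n : ℝ) + (i : ℝ)) :=
      Finset.sum_nonneg fun j _ => Finset.prod_nonneg fun i _ => by
        have : (0 : ℝ) ≤ i := Nat.cast_nonneg i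
        linarith
    linarith
  have h1 := k_pos (x - (n + 1)) (by linarith)
  have h2 := k_le (x - (n + 1)) (by linarith)
  rw [show x - ((n : ℝ) + 1) + 1 = x - n by ring] at h2
  have hU : ((kurepaP n x + 1) / kurepaP n x) * kurepaR (n + 1) x
      = (kurepaR (n + 1) x * Real.Gamma (x + 1) + Real.Gamma (x - n)) / Real.Gamma (x + 1) := by
    field_simp
    linear_combination -hP
  refine ⟨?_, ?_, ?_⟩
  · rw [lt_div_iff₀ hG]; linarith
  · rw [hU, hK]; gcongr
  · intro hxe
    rw [hU, hK]
    have e1 : x - ((n : ℝ) + 1) = 2 := by linarith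
    have e2 : x - (n : ℝ) = 2 + 1 := by linarith
    rw [e1, e2, k_two, Real.Gamma_add_one (s := 2) (by norm_num), Real.Gamma_two, mul_one]
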